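/- Fix c_0 > 0, θ > 1 and a closed interval [H_1, H_2] ⊂ ℝ. For x ∈ ℝ and k ∈ ℕ write c_0 θ^k x = r_k(x) + ε_k(x) with r_k(x) ∈ ℤ and ε_k(x) ∈ (−1/2, 1/2]. For ε ∈ (0, 1/2) and N ∈ ℕ let Γ_N(ε) = {x ∈ [H_1, H_2] : #{1 ≤ k ≤ N : ‖c_0 θ^k x‖ < 1/(2(1+θ))} > (1−ε)N}. Then the number of distinct integers of the form r_N(x) with x ∈ Γ_N(ε) is at most (Σ_{j=0}^{⌊εN⌋+1} C(N, j)) · (θ+2)^{2εN} · (c_0 θ (H_2 − H_1) + 1), where C(N, j) denotes the binomial coefficient. -/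

import Mathlib

open Real

/-- The distance from a real number to its nearest integer. -/
noncomputable def distNearestInt (x : ℝ) : ℝ := |x - round x|

/-- The unique integer `r` such that `y = r + e` with `e ∈ (-1/2, 1/2]`. -/
noncomputable def nearInt (y : ℝ) : ℤ := ⌈y - 1 / 2⌉

theorem nearInt_bounds (y : ℝ) : -(1 / 2) < y - nearInt y ∧ y - nearInt y ≤ 1 / 2 := by
  unfold nearInt
  have h1 := Int.le_ceil (y - 1 / 2)
  have h2 := Int.ceil_lt_add_one (y - 1 / 2)
  constructor <;> linarith

theorem nearInt_of_dist {y d : ℝ} (hd : d ≤ 1 / 2) (h : distNearestInt y < d) :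
    |y - nearInt y| < d := by
  have e : nearInt y = round y := by
    unfold nearInt
    unfold distNearestInt at h
    rw [abs_lt] at h
    rw [Int.ceil_eq_iff]
    constructor <;> linarith [h.1, h.2]
  rw [e]
  exact h

/-- integers in an open interval -/
noncomputable def intsIn (a b : ℝ) : Finset ℤ := Finset.Icc (⌊a⌋ + 1) (⌈b⌉ - 1)

theorem mem_intsIn {a b : ℝ} {z : ℤ} (h1 : a < z) (h2 : (z : ℝ) < b) : z ∈ intsIn a b := by
  unfold intsIn
  rw [Finset.mem_Icc]
  have := Int.floor_lt.2 h1
  have := Int.lt_ceil.2 h2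
  constructor <;> omega

theorem card_intsIn {a b : ℝ} (h : a ≤ b) : ((intsIn a b).card : ℝ) < b - a + 1 := by
  unfold intsIn
  rw [Int.card_Icc]
  have h1 := Int.lt_floor_add_one a
  have h2 := Int.ceil_lt_add_one b
  rcases le_total 0 (⌈b⌉ - 1 + 1 - (⌊a⌋ + 1)) with h0 | h0
  · have : (((⌈b⌉ - 1 + 1 - (⌊a⌋ + 1)).toNat : ℤ) : ℝ) = ((⌈b⌉ - 1 + 1 - (⌊a⌋ + 1) : ℤ) : ℝ) := by
      rw [Int.toNat_of_nonneg h0]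
    rw [Int.cast_natCast] at this
    rw [this]
    push_cast
    linarith [Int.floor_le a]
  · rw [Int.toNat_of_nonpos h0]
    push_cast
    linarith

theorem base_card {a b : ℝ} (h : a ≤ b) :
    ((Finset.Icc (nearInt a) (nearInt b)).card : ℝ) ≤ b - a + 2 := by
  rw [Int.card_Icc]
  have h1 := nearInt_bounds a
  have h2 := nearInt_bounds b
  rcases le_total 0 (nearInt b + 1 - nearInt a) with h0 | h0
  · have : (((nearInt b + 1 - nearInt a).toNat : ℤ) : ℝ)
        = ((nearInt b + 1 - nearInt a : ℤ) : ℝ) := by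
      rw [Int.toNat_of_nonneg h0]
    rw [Int.cast_natCast] at this
    rw [this]
    push_cast
    linarith [h1.1, h1.2, h2.1, h2.2]
  · rw [Int.toNat_of_nonpos h0]
    push_cast
    linarith

theorem nearInt_mono {a b : ℝ} (h : a ≤ b) : nearInt a ≤ nearInt b := by
  unfold nearInt
  exact Int.ceil_mono (by linarith)

/-- transition count -/
def trc (B : Finset ℕ) (k : ℕ) : ℕ := (B.filter (· < k)).card + (B.filter (· < k + 1)).card

theorem trc_mono (B : Finset ℕ) (k : ℕ) : trc B k ≤ trc B (k + 1) := by
  unfold trc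
  apply add_le_add <;>
  · apply Finset.card_le_card
    intro i
    simp only [Finset.mem_filter]
    rintro ⟨h, h'⟩
    exact ⟨h, by omega⟩

theorem trc_succ (B : Finset ℕ) (k : ℕ) (h : k ∈ B ∨ k + 1 ∈ B) : trc B k + 1 ≤ trc B (k + 1) := by
  have key : ∀ k ∈ B, (B.filter (· < k)).card + 1 ≤ (B.filter (· < k + 1)).card := by
    intro k hk
    apply Finset.card_lt_card
    rw [Finset.ssubset_iff_of_subset]
    · exact ⟨k, by simp [hk], by simp⟩
    · intro i
      simp only [Finset.mem_filter]
      rintro ⟨h, h'⟩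
      exact ⟨h, by omega⟩
  have mono : ∀ k, (B.filter (· < k)).card ≤ (B.filter (· < k + 1)).card := by
    intro k
    apply Finset.card_le_card
    intro i
    simp only [Finset.mem_filter]
    rintro ⟨h, h'⟩
    exact ⟨h, by omega⟩
  unfold trc
  have m1 := mono k
  have m2 := mono (k + 1)
  rcases h with h | h
  · have := key k h
    omega
  · have := key _ h
    omega

theorem trc_le (B : Finset ℕ) (k : ℕ) : trc B k ≤ 2 * B.card := by
  unfold trc
  have := Finset.card_filter_le B (· < k)
  have := Finset.card_filter_le B (· < k + 1)
  omega

theorem path_bound (c₀ : ℝ) (hc₀ : 0 < c₀) (θ : ℝ) (hθ : 1 < θ) (H₁ H₂ : ℝ) (hH : H₁ ≤ H₂)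
    (N : ℕ) (B : Finset ℕ) (k : ℕ) (hk : 1 ≤ k) : k ≤ N →
    ∃ F : Finset ℤ, (∀ x ∈ Set.Icc H₁ H₂,
      (∀ i ∈ Finset.Icc 1 N, i ∉ B → distNearestInt (c₀ * θ ^ i * x) < 1 / (2 * (1 + θ))) →
      nearInt (c₀ * θ ^ k * x) ∈ F) ∧
      (F.card : ℝ) ≤ (c₀ * θ * (H₂ - H₁) + 2) * (θ + 2) ^ (trc B k) := by
  have hL : 0 ≤ c₀ * θ * (H₂ - H₁) :=
    mul_nonneg (by positivity) (by linarith)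
  have hd : 1 / (2 * (1 + θ)) ≤ 1 / 2 := by
    apply one_div_le_one_div_of_le <;> linarith
  induction k, hk using Nat.le_induction with
  | base =>
    intro _
    refine ⟨Finset.Icc (nearInt (c₀ * θ * H₁)) (nearInt (c₀ * θ * H₂)), ?_, ?_⟩
    · intro x hx _
      rw [pow_one, Finset.mem_Icc]
      have hp : 0 ≤ c₀ * θ := by positivity
      exact ⟨nearInt_mono (mul_le_mul_of_nonneg_left hx.1 hp),
        nearInt_mono (mul_le_mul_of_nonneg_left hx.2 hp)⟩
    · have hp : 0 ≤ c₀ * θ := by positivity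
      have h1 := base_card (mul_le_mul_of_nonneg_left hH hp)
      have h2 : (1 : ℝ) ≤ (θ + 2) ^ (trc B 1) := one_le_pow₀ (by linarith)
      nlinarith
  | succ k hk ih =>
    intro hkN
    obtain ⟨F, hF, hc⟩ := ih (by omega)
    have step : ∀ (δ : ℝ) (M : ℝ), 0 ≤ M → (∀ r : ℤ, ((intsIn (θ * r - δ) (θ * r + δ)).card : ℝ) ≤ M) →
        (((F.biUnion fun r => intsIn (θ * r - δ) (θ * r + δ)).card : ℝ) ≤ F.card * M) := by
      intro δ M hM h
      calc _ ≤ ((∑ r ∈ F, (intsIn (θ * r - δ) (θ * r + δ)).card : ℕ) : ℝ) := by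
            exact_mod_cast Finset.card_biUnion_le
        _ = ∑ r ∈ F, ((intsIn (θ * r - δ) (θ * r + δ)).card : ℝ) := by push_cast; rfl
        _ ≤ ∑ r ∈ F, M := Finset.sum_le_sum fun r _ => h r
        _ = _ := by simp
    by_cases hB : k ∈ B ∨ k + 1 ∈ B
    · refine ⟨F.biUnion fun r => intsIn (θ * r - (θ + 1) / 2) (θ * r + (θ + 1) / 2), ?_, ?_⟩
      · intro x hx hgood
        rw [Finset.mem_biUnion]
        refine ⟨_, hF x hx hgood, ?_⟩
        have b1 := nearInt_bounds (c₀ * θ ^ k * x)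
        have b2 := nearInt_bounds (c₀ * θ ^ (k + 1) * x)
        have e : c₀ * θ ^ (k + 1) * x = θ * (c₀ * θ ^ k * x) := by ring
        rw [e] at b2 ⊢
        generalize c₀ * θ ^ k * x = y at *
        have c1 : θ * (-(1 / 2)) < θ * (y - nearInt y) := mul_lt_mul_of_pos_left b1.1 (by linarith)
        have c2 : θ * (y - nearInt y) ≤ θ * (1 / 2) := mul_le_mul_of_nonneg_left b1.2 (by linarith)
        apply mem_intsIn <;> linarith [b2.1, b2.2]
      · have s := step ((θ + 1) / 2) (θ + 2) (by linarith) (fun r => by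
          have := card_intsIn (a := θ * r - (θ + 1) / 2) (b := θ * r + (θ + 1) / 2) (by linarith)
          linarith)
        refine s.trans ?_
        calc (F.card : ℝ) * (θ + 2)
            ≤ (c₀ * θ * (H₂ - H₁) + 2) * (θ + 2) ^ (trc B k) * (θ + 2) :=
              mul_le_mul_of_nonneg_right hc (by linarith)
          _ = (c₀ * θ * (H₂ - H₁) + 2) * (θ + 2) ^ (trc B k + 1) := by ring
          _ ≤ _ := mul_le_mul_of_nonneg_left
              (pow_le_pow_right₀ (by linarith) (trc_succ B k hB)) (by linarith)
    · push Not at hB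
      refine ⟨F.biUnion fun r => intsIn (θ * r - 1 / 2) (θ * r + 1 / 2), ?_, ?_⟩
      · intro x hx hgood
        rw [Finset.mem_biUnion]
        refine ⟨_, hF x hx hgood, ?_⟩
        have b1 := nearInt_of_dist hd (hgood k (by rw [Finset.mem_Icc]; omega) hB.1)
        have b2 := nearInt_of_dist hd (hgood (k + 1) (by rw [Finset.mem_Icc]; omega) hB.2)
        have e : c₀ * θ ^ (k + 1) * x = θ * (c₀ * θ ^ k * x) := by ring
        rw [e] at b2 ⊢
        generalize c₀ * θ ^ k * x = y at *
        rw [abs_lt] at b1 b2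
        have hdd : θ * (1 / (2 * (1 + θ))) + 1 / (2 * (1 + θ)) = 1 / 2 := by
          field_simp
          try ring
        generalize 1 / (2 * (1 + θ)) = d at *
        have c1 : θ * (-d) < θ * (y - nearInt y) := mul_lt_mul_of_pos_left b1.1 (by linarith)
        have c2 : θ * (y - nearInt y) < θ * d := mul_lt_mul_of_pos_left b1.2 (by linarith)
        apply mem_intsIn <;> linarith [b2.1, b2.2]
      · have s := step (1 / 2) 1 (by linarith) (fun r => by
          have := card_intsIn (a := θ * r - 1 / 2) (b := θ * r + 1 / 2) (by linarith)
          have h2 : ((intsIn (θ * r - 1 / 2) (θ * r + 1 / 2)).card : ℝ) < 2 := by linarith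
          have h3 : (intsIn (θ * r - 1 / 2) (θ * r + 1 / 2)).card < 2 := by exact_mod_cast h2
          have h4 : (intsIn (θ * r - 1 / 2) (θ * r + 1 / 2)).card ≤ 1 := by omega
          exact_mod_cast h4)
        rw [mul_one] at s
        refine s.trans (hc.trans ?_)
        exact mul_le_mul_of_nonneg_left
              (pow_le_pow_right₀ (by linarith) (trc_mono B k)) (by linarith)

theorem sum_bound (N m : ℕ) (hm : 2 * m + 1 ≤ N) (T L : ℝ) (hT : 3 ≤ T) (hL : 0 ≤ L) :
    ∑ j ∈ Finset.range (m + 1), (N.choose j : ℝ) * ((L + 2) * T ^ (2 * j)) ≤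
      (∑ j ∈ Finset.range (m + 2), (N.choose j : ℝ)) * T ^ (2 * m) * (L + 1) := by
  have hch : (N.choose m : ℝ) ≤ N.choose (m + 1) := by
    have : N.choose m ≤ N.choose (m + 1) := by
      have h := Nat.choose_succ_right_eq N m
      by_contra hlt
      push Not at hlt
      have h1 : N.choose (m + 1) * (m + 1) < N.choose m * (m + 1) :=
        Nat.mul_lt_mul_of_pos_right hlt (by omega)
      have h2 : N.choose m * (m + 1) ≤ N.choose m * (N - m) := Nat.mul_le_mul_left _ (by omega)
      omega
    exact_mod_cast this
  rw [Finset.sum_range_succ, Finset.sum_range_succ _ (m + 1), Finset.sum_range_succ _ m]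
  have hlow : ∑ j ∈ Finset.range m, (N.choose j : ℝ) * ((L + 2) * T ^ (2 * j)) ≤
      (∑ j ∈ Finset.range m, (N.choose j : ℝ)) * (T ^ (2 * m) * (L + 1)) := by
    rw [Finset.sum_mul]
    apply Finset.sum_le_sum
    intro j hj
    rw [Finset.mem_range] at hj
    apply mul_le_mul_of_nonneg_left _ (Nat.cast_nonneg _)
    have h1 : T ^ (2 * j) * 2 ≤ T ^ (2 * m) := by
      calc T ^ (2 * j) * 2 ≤ T ^ (2 * j) * T := by
            apply mul_le_mul_of_nonneg_left (by linarith) (by positivity)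
        _ = T ^ (2 * j + 1) := by ring
        _ ≤ _ := pow_le_pow_right₀ (by linarith) (by omega)
    have h0 : 0 ≤ T ^ (2 * j) := by positivity
    nlinarith
  have h0 : 0 ≤ T ^ (2 * m) := by positivity
  have hmid : (N.choose m : ℝ) * ((L + 2) * T ^ (2 * m)) ≤
      (N.choose m + N.choose (m + 1) : ℝ) * (T ^ (2 * m) * (L + 1)) := by
    have hn : (0 : ℝ) ≤ N.choose m := Nat.cast_nonneg _
    have : (N.choose m : ℝ) * (L + 2) ≤ (N.choose m + N.choose (m + 1) : ℝ) * (L + 1) := by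
      nlinarith
    have := mul_le_mul_of_nonneg_right this h0
    linarith
  linarith

/-- the number of distinct integers `r_N(x) = nearInt (c₀ θ^N x)` with
`x ∈ Γ_N(ε)` is at most `(Σ_{j=0}^{⌊εN⌋+1} C(N,j)) · (θ+2)^{2εN} · (c₀ θ (H₂-H₁) + 1)`. -/
theorem stmt9
    (c₀ : ℝ) (hc₀ : 0 < c₀) (θ : ℝ) (hθ : 1 < θ) (H₁ H₂ : ℝ) (hH : H₁ ≤ H₂)
    (ε : ℝ) (hε : ε ∈ Set.Ioo (0 : ℝ) (1 / 2)) (N : ℕ) :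
    (setOf fun z : ℤ => ∃ x ∈ Set.Icc H₁ H₂,
        (1 - ε) * N <
          (((Finset.Icc 1 N).filter fun k =>
              distNearestInt (c₀ * θ ^ k * x) < 1 / (2 * (1 + θ))).card : ℝ) ∧
        nearInt (c₀ * θ ^ N * x) = z).Finite ∧
    ((setOf fun z : ℤ => ∃ x ∈ Set.Icc H₁ H₂,
        (1 - ε) * N <
          (((Finset.Icc 1 N).filter fun k =>
              distNearestInt (c₀ * θ ^ k * x) < 1 / (2 * (1 + θ))).card : ℝ) ∧
        nearInt (c₀ * θ ^ N * x) = z).ncard : ℝ) ≤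
      (∑ j ∈ Finset.range (⌊ε * N⌋₊ + 2), (N.choose j : ℝ)) *
        (θ + 2) ^ (2 * ε * (N : ℝ)) * (c₀ * θ * (H₂ - H₁) + 1) := by
  have hL : 0 ≤ c₀ * θ * (H₂ - H₁) :=
    mul_nonneg (by positivity) (by linarith)
  obtain ⟨hε0, hε1⟩ := hε
  set S := (setOf fun z : ℤ => ∃ x ∈ Set.Icc H₁ H₂,
        (1 - ε) * N <
          (((Finset.Icc 1 N).filter fun k =>
              distNearestInt (c₀ * θ ^ k * x) < 1 / (2 * (1 + θ))).card : ℝ) ∧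
        nearInt (c₀ * θ ^ N * x) = z) with hS
  rcases Nat.eq_zero_or_pos N with h0 | hN
  · have : S = ∅ := by
      rw [Set.eq_empty_iff_forall_notMem]
      rintro z ⟨x, _, h, _⟩
      subst h0
      simp at h
    rw [this]
    refine ⟨Set.finite_empty, ?_⟩
    rw [Set.ncard_empty, Nat.cast_zero]
    positivity
  have hN' : (1 : ℝ) ≤ N := by exact_mod_cast hN
  set m := ⌊ε * N⌋₊ with hm
  have hmle : (m : ℝ) ≤ ε * N := Nat.floor_le (by positivity)
  have hmN : 2 * m + 1 ≤ N := by
    have : (2 * m : ℝ) < N := by nlinarith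
    have : 2 * m < N := by exact_mod_cast this
    omega
  choose F hF hFc using fun B : Finset ℕ =>
    path_bound c₀ hc₀ θ hθ H₁ H₂ hH N B N hN le_rfl
  let G : Finset ℤ := (Finset.range (m + 1)).biUnion fun j =>
    (Finset.powersetCard j (Finset.Icc 1 N)).biUnion F
  have hSG : S ⊆ (G : Set ℤ) := by
    rintro z ⟨x, hx, hcard, rfl⟩
    let B := (Finset.Icc 1 N).filter fun k =>
      ¬ distNearestInt (c₀ * θ ^ k * x) < 1 / (2 * (1 + θ))
    have hsum := Finset.card_filter_add_card_filter_not (s := Finset.Icc 1 N)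
      (fun k => distNearestInt (c₀ * θ ^ k * x) < 1 / (2 * (1 + θ)))
    rw [Nat.card_Icc, Nat.add_sub_cancel] at hsum
    have hBm : B.card ≤ m := by
      apply Nat.le_floor
      have h : (((Finset.Icc 1 N).filter fun k =>
              distNearestInt (c₀ * θ ^ k * x) < 1 / (2 * (1 + θ))).card : ℝ) + (B.card : ℝ) = N := by
        exact_mod_cast hsum
      linarith
    simp only [G, Finset.coe_biUnion, Set.mem_iUnion, Finset.mem_coe]
    refine ⟨B.card, Finset.mem_range.2 (by omega), B, ?_, ?_⟩
    · rw [Finset.mem_powersetCard]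
      exact ⟨Finset.filter_subset _ _, rfl⟩
    · apply hF B x hx
      intro i hi hiB
      by_contra hcon
      exact hiB (Finset.mem_filter.2 ⟨hi, hcon⟩)
  refine ⟨G.finite_toSet.subset hSG, ?_⟩
  have h1 : S.ncard ≤ G.card := by
    rw [← Set.ncard_coe_finset]
    exact Set.ncard_le_ncard hSG G.finite_toSet
  have h2 : (G.card : ℝ) ≤ ∑ j ∈ Finset.range (m + 1),
      (N.choose j : ℝ) * ((c₀ * θ * (H₂ - H₁) + 2) * (θ + 2) ^ (2 * j)) := by
    have a1 : G.card ≤ ∑ j ∈ Finset.range (m + 1),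
        ∑ B ∈ Finset.powersetCard j (Finset.Icc 1 N), (F B).card :=
      Finset.card_biUnion_le.trans (Finset.sum_le_sum fun j _ => Finset.card_biUnion_le)
    have a2 : (G.card : ℝ) ≤ ∑ j ∈ Finset.range (m + 1),
        ∑ B ∈ Finset.powersetCard j (Finset.Icc 1 N), ((F B).card : ℝ) := by exact_mod_cast a1
    refine a2.trans (Finset.sum_le_sum fun j _ => ?_)
    calc _ ≤ ∑ B ∈ Finset.powersetCard j (Finset.Icc 1 N),
          ((c₀ * θ * (H₂ - H₁) + 2) * (θ + 2) ^ (2 * j)) := by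
          apply Finset.sum_le_sum
          intro B hB
          rw [Finset.mem_powersetCard] at hB
          refine (hFc B).trans (mul_le_mul_of_nonneg_left
              (pow_le_pow_right₀ (by linarith) ?_) (by linarith))
          rw [← hB.2]
          exact trc_le B N
      _ = _ := by
          rw [Finset.sum_const, Finset.card_powersetCard, Nat.card_Icc, nsmul_eq_mul,
            Nat.add_sub_cancel]
  have h3 := sum_bound N m hmN (θ + 2) (c₀ * θ * (H₂ - H₁)) (by linarith) hL
  have h4 : (θ + 2) ^ (2 * m) ≤ (θ + 2) ^ (2 * ε * (N : ℝ)) := by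
    rw [← Real.rpow_natCast]
    apply Real.rpow_le_rpow_of_exponent_le (by linarith)
    push_cast
    linarith
  calc (S.ncard : ℝ) ≤ G.card := by exact_mod_cast h1
    _ ≤ _ := h2
    _ ≤ _ := h3
    _ ≤ _ := by
      apply mul_le_mul_of_nonneg_right _ (by linarith)
      apply mul_le_mul_of_nonneg_left h4
      positivity
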